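/- Let x be an infinite word over a finite alphabet A and let c : Fact(x) → C be a factor coloring of x with C finite. Then there exists i ∈ ℕ and a strictly increasing sequence i = i_0 < i_1 < i_2 < ⋯ of natural numbers such that all the factors x_{[i_j, i_{j+k}-1]} for j ∈ ℕ and k ≥ 1 have the same color under c, and additionally i_{j+1} − i_j ≤ i_{j+2} − i_{j+1} for every j ∈ ℕ. That is, the tail x_{[i,∞)} admits a monotone strongly c-monochromatic infinite factorization. -/

import Mathlib

/-- The factor of the infinite word `x` of length `n` starting at position `i`,
i.e. the word `x_i x_{i+1} ⋯ x_{i+n-1}`. -/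
def seg {A : Type*} (x : ℕ → A) (i n : ℕ) : List A :=
  (List.range n).map fun k => x (i + k)

/-- `u` is a (nonempty, finite) factor of the infinite word `x`. -/
def IsFactor {A : Type*} (x : ℕ → A) (u : List A) : Prop :=
  u ≠ [] ∧ ∃ i, u = seg x i u.length

/-- `u` is a (finite) prefix of the infinite word `x`. -/
def IsPrefixOf {A : Type*} (x : ℕ → A) (u : List A) : Prop :=
  u = seg x 0 u.length

/-- The finite word `u` occurs in the finite word `v` at position `i`. -/
def OccursAt {A : Type*} (u v : List A) (i : ℕ) : Prop :=
  i + u.length ≤ v.length ∧ (v.drop i).take u.length = u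

/-- `w` is a return word to `u` in `x`: `w` is nonempty, `w ++ u` is a factor of
`x`, and `u` occurs exactly twice in `w ++ u`. -/
def IsReturn {A : Type*} (x : ℕ → A) (u w : List A) : Prop :=
  w ≠ [] ∧ IsFactor x (w ++ u) ∧ {i | OccursAt u (w ++ u) i}.ncard = 2

/-- The set of return words to `u` in `x`. -/
def Ret {A : Type*} (x : ℕ → A) (u : List A) : Set (List A) :=
  {w | IsReturn x u w}

/-- `x` is uniformly recurrent: every factor has a nonempty and finite set of
return words. -/
def UniformlyRecurrent {A : Type*} (x : ℕ → A) : Prop :=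
  ∀ u, IsFactor x u → (Ret x u).Nonempty ∧ (Ret x u).Finite

/-- `x` is aperiodic: there is no `n ≥ 1` with `x (i + n) = x i` for all `i`. -/
def Aperiodic {A : Type*} (x : ℕ → A) : Prop :=
  ¬ ∃ n : ℕ, 1 ≤ n ∧ ∀ i : ℕ, x (i + n) = x i

/-!
Colouring a pair of positions `m < n` by the colour of the factor of `x` between them turns the
claim into Ramsey's theorem for pairs. A nonprincipal ultrafilter on the positions gives every `m` a
limit colour, and a homogeneous sequence is chosen greedily among positions sharing one limit
colour. Since the ultrafilter contains every final segment of `ℕ`, the next position can be taken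
beyond twice the current one; then each gap exceeds the whole prefix before it, hence the preceding
gap.
-/

section Ramsey

open Filter

theorem exists_seq_monochromatic_of_eventually {α C : Type*} [Finite C] (l : Filter α) [l.NeBot]
    {r : α → α → Prop} (hr : ∀ a, ∀ᶠ b in l, r a b) (color : ∀ a b, r a b → C) :
    ∃ (col : C) (f : ℕ → α), ∀ m n, m < n → ∃ h : r (f m) (f n), color (f m) (f n) h = col := by
  obtain ⟨U, hU⟩ := l.exists_ultrafilter_le
  have exists_limit (a : α) : ∃ col, ∀ᶠ b in U, ∃ h : r a b, color a b h = col :=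
    Ultrafilter.eventually_exists_iff.1 <|
      ((hr a).filter_mono hU).mono fun b h ↦ ⟨color a b h, h, rfl⟩
  choose limitColor eventually_color using exists_limit
  obtain ⟨col, hcol⟩ : ∃ col, ∀ᶠ a in U, limitColor a = col :=
    Ultrafilter.eventually_exists_iff.1 <| .of_forall fun a ↦ ⟨limitColor a, rfl⟩
  obtain ⟨f, -, hf⟩ := exists_seq_of_forall_finset_exists (fun a ↦ limitColor a = col)
    (fun a b ↦ ∃ h : r a b, color a b h = col) fun s hs ↦ by
      have common_successor : ∀ᶠ b in U, ∀ a ∈ s, ∃ h : r a b, color a b h = col :=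
        (eventually_all_finset s).2 fun a ha ↦ hs a ha ▸ eventually_color a
      exact (hcol.and common_successor).exists
  exact ⟨col, f, hf⟩

end Ramsey

section Factor

variable {A : Type*} (x : ℕ → A)

@[simp]
theorem length_seg (i n : ℕ) : (seg x i n).length = n := by
  simp [seg]

theorem isFactor_seg (i : ℕ) {n : ℕ} (hn : 0 < n) : IsFactor x (seg x i n) :=
  ⟨List.ne_nil_of_length_pos (by simpa using hn), i, by simp⟩

end Factor

theorem stmt3_general {A C : Type*} [Finite C]
    (x : ℕ → A) (c : {u : List A // IsFactor x u} → C) :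
    ∃ (i : ℕ) (f : ℕ → ℕ), f 0 = i ∧ StrictMono f ∧
      (∀ j : ℕ, f (j + 1) - f j ≤ f (j + 2) - f (j + 1)) ∧
      ∃ col : C, ∀ j k : ℕ, 1 ≤ k →
        ∀ hf : IsFactor x (seg x (f j) (f (j + k) - f j)),
          c ⟨seg x (f j) (f (j + k) - f j), hf⟩ = col := by
  have sparse (m : ℕ) : ∀ᶠ n in Filter.atTop, 2 * m < n := Filter.eventually_gt_atTop (2 * m)
  obtain ⟨col, f, hf⟩ := exists_seq_monochromatic_of_eventually Filter.atTop sparse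
    fun m n h ↦ c ⟨seg x m (n - m), isFactor_seg x m (by omega)⟩
  have two_mul_lt (j : ℕ) : 2 * f j < f (j + 1) := (hf j (j + 1) j.lt_succ_self).1
  refine ⟨f 0, f, rfl, strictMono_nat_of_lt_succ fun j ↦ ?_, fun j ↦ ?_, col, fun j k hk _ ↦ ?_⟩
  · exact (Nat.le_mul_of_pos_left (f j) two_pos).trans_lt (two_mul_lt j)
  · have : 2 * f (j + 1) < f (j + 2) := two_mul_lt (j + 1)
    omega
  · exact (hf j (j + k) (Nat.lt_add_of_pos_right hk)).2

/-- For every factor coloring `c` of an infinite word `x` over a finite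
alphabet with finitely many colors, there exist `i ∈ ℕ` and a strictly increasing
sequence `i = i₀ < i₁ < i₂ < ⋯` such that all the factors `x_{[i_j, i_{j+k}-1]}` for
`j ∈ ℕ` and `k ≥ 1` have the same color, and moreover
`i_{j+1} - i_j ≤ i_{j+2} - i_{j+1}` for all `j`; i.e. the tail `x_{[i,∞)}` admits a
monotone strongly `c`-monochromatic infinite factorization. -/
theorem stmt3 {A : Type*} {C : Type*} [Fintype A] [Finite C]
    (x : ℕ → A) (c : {u : List A // IsFactor x u} → C) :
    ∃ (i : ℕ) (f : ℕ → ℕ), f 0 = i ∧ StrictMono f ∧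
      (∀ j : ℕ, f (j + 1) - f j ≤ f (j + 2) - f (j + 1)) ∧
      ∃ col : C, ∀ j k : ℕ, 1 ≤ k →
        ∀ hf : IsFactor x (seg x (f j) (f (j + k) - f j)),
          c ⟨seg x (f j) (f (j + k) - f j), hf⟩ = col :=
  stmt3_general x c
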